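/- Given a symmetric Kripke model N = (W, R, V) and its translation N^ρ = (W, Ag ∪ {b}, E, C, ν) (where b ∉ Ag, E(s,t) = { a ∈ Ag | (s,t) ∈ R(a) }, C(a) = {a}, and ν(s) = { p ∈ Prop | s ∈ V(p) }): for every formula φ of the language ELCD (with modalities K_a, C_G, D_G but not F_G) and every state s ∈ W, N,s ⊩ φ under Kripke semantics if and only if N^ρ,s ⊨ φ under similarity-model semantics. -/

import Mathlib

/-- Formulas of the language ELCD (modalities `K_a`, `C_G`, `D_G`, but no
`F_G`) over a set `Ag` of agents, with propositional variables drawn from the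
countably infinite set `ℕ`.  Groups are nonempty finite sets of agents. -/
inductive Formula (Ag : Type) : Type
  | atom : ℕ → Formula Ag
  | neg  : Formula Ag → Formula Ag
  | impl : Formula Ag → Formula Ag → Formula Ag
  | K    : Ag → Formula Ag → Formula Ag
  | C    : (G : Finset Ag) → G.Nonempty → Formula Ag → Formula Ag
  | D    : (G : Finset Ag) → G.Nonempty → Formula Ag → Formula Ag

/-- A similarity model `(W, A, E, C, ν)`. -/
structure SimModel (Ag : Type) where
  W : Type
  A : Type
  w_nonempty : Nonempty W
  E : W → W → Set A
  Cap : Ag → Set A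
  val : W → Set ℕ
  positivity : ∀ s t : W, E s t = Set.univ → s = t
  symmetry : ∀ s t : W, E s t = E t s

/-- Satisfaction on similarity models (common knowledge via chains of
`G`-edges, equivalently `E_G^n` for every positive `n`). -/
def SimModel.sat {Ag : Type} (M : SimModel Ag) : M.W → Formula Ag → Prop
  | s, .atom p => p ∈ M.val s
  | s, .neg φ => ¬ M.sat s φ
  | s, .impl φ ψ => M.sat s φ → M.sat s ψ
  | s, .K a φ => ∀ t, M.Cap a ⊆ M.E s t → M.sat t φ
  | s, .C G _ φ =>
      ∀ t, Relation.TransGen (fun u v => ∃ a ∈ G, M.Cap a ⊆ M.E u v) s t → M.sat t φ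
  | s, .D G _ φ => ∀ t, (⋃ a ∈ G, M.Cap a) ⊆ M.E s t → M.sat t φ

/-- A Kripke model `(W, R, V)`. -/
structure KripkeModel (Ag : Type) where
  W : Type
  w_nonempty : Nonempty W
  R : Ag → W → W → Prop
  V : ℕ → Set W

/-- Kripke satisfaction `N,s ⊩ φ` (common knowledge via chains of `G`-steps,
equivalently `E_G^n` for every positive `n`; distributed knowledge via the
intersection `⋂_{a∈G} R(a)`). -/
def KripkeModel.sat {Ag : Type} (N : KripkeModel Ag) : N.W → Formula Ag → Prop
  | s, .atom p => s ∈ N.V p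
  | s, .neg φ => ¬ N.sat s φ
  | s, .impl φ ψ => N.sat s φ → N.sat s ψ
  | s, .K a φ => ∀ t, N.R a s t → N.sat t φ
  | s, .C G _ φ =>
      ∀ t, Relation.TransGen (fun u v => ∃ a ∈ G, N.R a u v) s t → N.sat t φ
  | s, .D G _ φ => ∀ t, (∀ a ∈ G, N.R a s t) → N.sat t φ

/-- The translation `N^ρ` of a symmetric Kripke model `N`: the abilities are
`Ag ∪ {b}` for a new agent `b` (rendered as `Ag ⊕ Unit`),
`E(s,t) = { a ∈ Ag ∣ (s,t) ∈ R(a) }`, `C(a) = {a}`, and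
`ν(s) = { p ∣ s ∈ V(p) }`. -/
def kripkeToSim {Ag : Type} (N : KripkeModel Ag) (hsym : ∀ a : Ag, Symmetric (N.R a)) :
    SimModel Ag where
  W := N.W
  A := Ag ⊕ Unit
  w_nonempty := N.w_nonempty
  E s t := Sum.inl '' { a : Ag | N.R a s t }
  Cap a := {Sum.inl a}
  val s := { p : ℕ | s ∈ N.V p }
  positivity := by
    intro s t h
    exfalso
    have hmem : (Sum.inr () : Ag ⊕ Unit) ∈ Sum.inl '' { a : Ag | N.R a s t } := by
      have h' : Sum.inl '' { a : Ag | N.R a s t } = (Set.univ : Set (Ag ⊕ Unit)) := h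
      rw [h']; exact Set.mem_univ _
    rcases hmem with ⟨a, _, ha⟩
    exact Sum.inl_ne_inr ha
  symmetry := by
    intro s t
    ext x
    constructor <;> rintro ⟨a, ha, rfl⟩ <;> exact ⟨a, hsym a ha, rfl⟩

theorem kripkeToSim_cap {Ag : Type} (N : KripkeModel Ag)
    (hsym : ∀ a : Ag, Symmetric (N.R a)) (a : Ag) (s t : N.W) :
    (kripkeToSim N hsym).Cap a ⊆ (kripkeToSim N hsym).E s t ↔ N.R a s t := by
  change ({Sum.inl a} : Set (Ag ⊕ Unit)) ⊆ Sum.inl '' { a : Ag | N.R a s t } ↔ _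
  simp

/-- the translation preserves truth: for every ELCD-formula `φ`
and every state `s`, `N,s ⊩ φ` iff `N^ρ,s ⊨ φ`. -/
theorem stmt_13 {Ag : Type} [Fintype Ag] [Nonempty Ag]
    (N : KripkeModel Ag) (hsym : ∀ a : Ag, Symmetric (N.R a))
    (φ : Formula Ag) (s : N.W) :
    N.sat s φ ↔ (kripkeToSim N hsym).sat s φ := by
  induction φ generalizing s with
  | atom p => exact Iff.rfl
  | neg φ ih => exact not_congr (ih s)
  | impl φ ψ ih1 ih2 => exact imp_congr (ih1 s) (ih2 s)
  | K a φ ih =>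
    exact forall_congr' fun t => imp_congr (kripkeToSim_cap N hsym a s t).symm (ih t)
  | C G hG φ ih =>
    have h : (fun u v : N.W => ∃ a ∈ G, N.R a u v) =
        (fun u v : N.W => ∃ a ∈ G,
          (kripkeToSim N hsym).Cap a ⊆ (kripkeToSim N hsym).E u v) := by
      funext u v
      exact propext (exists_congr fun a =>
        and_congr_right fun _ => (kripkeToSim_cap N hsym a u v).symm)
    refine forall_congr' fun t => imp_congr ?_ (ih t)
    rw [h]
    exact Iff.rfl
  | D G hG φ ih =>
    refine forall_congr' fun t => imp_congr ?_ (ih t)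
    rw [Set.iUnion₂_subset_iff]
    exact forall₂_congr fun a _ => (kripkeToSim_cap N hsym a s t).symm
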